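/- Let n ≥ 1, let V : ℝⁿ → ℝ be bounded, continuous and nonnegative, and let u : [0,∞) × ℝⁿ → ℝ be a smooth solution of ∂ₜ²u − Δₓu + V·u + ∂ₜu = 0 with u(0,·) = u₀ ∈ Cc^∞(ℝⁿ), ∂ₜu(0,·) = u₁ ∈ Cc^∞(ℝⁿ), such that for every T > 0 there is R > 0 with u(t,·) supported in the ball of radius R for all t ∈ [0,T]. Then for all t ≥ 0: ∫₀ᵗ (1+s)(‖∇ₓu(s,·)‖² + ∫_{ℝⁿ} V(x)|u(s,x)|² dx) ds + ((1+t)/4)‖u(t,·)‖² ≤ 3E(0) + 3∫₀ᵗ E(s) ds + (u₁,u₀) + ½‖u(t,·)‖² + ∫₀ᵗ ‖u(s,·)‖² ds, and moreover ∫₀ᵗ (1+s)‖∂ₜu(s,·)‖² ds ≤ E(0) + ∫₀ᵗ E(s) ds. -/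

import Mathlib

open MeasureTheory

noncomputable section

/-- The Laplacian of `f : ℝⁿ → ℝ`, as the sum of second derivatives in the
coordinate directions. -/
def lap {n : ℕ} (f : EuclideanSpace ℝ (Fin n) → ℝ) (x : EuclideanSpace ℝ (Fin n)) : ℝ :=
  ∑ i : Fin n, iteratedFDeriv ℝ 2 f x ![EuclideanSpace.single i 1, EuclideanSpace.single i 1]

/-- The total energy `E(t) = ½∫ (|∂ₜu|² + |∇ₓu|² + V|u|²) dx`. -/
def energy {n : ℕ} (V : EuclideanSpace ℝ (Fin n) → ℝ)
    (u : ℝ → EuclideanSpace ℝ (Fin n) → ℝ) (t : ℝ) : ℝ :=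
  (1/2) * ∫ x, ((deriv (fun s => u s x) t) ^ 2 + ‖gradient (u t) x‖ ^ 2 + V x * (u t x) ^ 2)

/-!
Write `Q(u) = ‖∇u‖² + ∫ V u²`. Testing the equation with `∂ₜu` and with `u` gives `E' = -‖∂ₜu‖²` and
`(∂ₜu, u)' = ‖∂ₜu‖² - Q(u) - (∂ₜu, u)`, hence
`((1 + s) E)' = E - (1 + s) ‖∂ₜu‖²` and
`((1 + s) (∂ₜu, u) + (s / 2) ‖u‖²)' = (1 + s) (‖∂ₜu‖² - Q(u)) + ½ ‖u‖²`.
Integrating the first over `[0, t]` bounds `∫₀ᵗ (1 + s) ‖∂ₜu‖²`, and with it the right-hand side of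
the second. The boundary term `-(1 + t) (∂ₜu, u)` of the second is absorbed by Young's inequality
`-(∂ₜu, u) ≤ ‖∂ₜu‖² + ¼ ‖u‖²`, since `(1 + t) ‖∂ₜu‖² ≤ 2 (1 + t) E(t)` is controlled by the first.
-/

open Function Set Filter Topology InnerProductSpace Laplacian

section TimeDeriv

variable {E F : Type*} [NormedAddCommGroup F] [NormedSpace ℝ F]

/-- The partial derivative `∂ₜu` of a curried function of time and space, with the junk value `0`
of `deriv` where `u` is not differentiable in time. -/
def timeDeriv (u : ℝ → E → F) (t : ℝ) (x : E) : F :=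
  deriv (fun s => u s x) t

variable [NormedAddCommGroup E] [NormedSpace ℝ E] {u : ℝ → E → F} {m n : WithTop ℕ∞}

theorem contDiff_uncurry_timeDeriv (hu : ContDiff ℝ n (uncurry u)) (hmn : m + 1 ≤ n) :
    ContDiff ℝ m (uncurry (timeDeriv u)) := by
  have hswap : ContDiff ℝ n (uncurry fun (p : ℝ × E) (s : ℝ) => u s p.2) :=
    hu.comp (contDiff_snd.prodMk (contDiff_snd.comp contDiff_fst))
  exact (hswap.fderiv contDiff_fst hmn).clm_apply contDiff_const

theorem hasDerivAt_timeDeriv (hu : ContDiff ℝ 1 (uncurry u)) (t : ℝ) (x : E) :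
    HasDerivAt (fun s => u s x) (timeDeriv u t x) t := by
  have hslice : ContDiff ℝ 1 (fun s => u s x) := hu.comp (contDiff_prodMk_left x)
  exact (hslice.differentiable one_ne_zero t).hasDerivAt

theorem timeDeriv_eq_fderiv_uncurry (hu : ContDiff ℝ 1 (uncurry u)) (t : ℝ) (x : E) :
    timeDeriv u t x = fderiv ℝ (uncurry u) (t, x) (1, 0) := by
  have hfderiv := (hu.differentiable one_ne_zero (t, x)).hasFDerivAt
  have htime := hfderiv.comp_hasDerivAt t ((hasDerivAt_id t).prodMk (hasDerivAt_const t x))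
  exact htime.deriv

theorem fderiv_eq_fderiv_uncurry_comp_inr (hu : ContDiff ℝ 1 (uncurry u)) (t : ℝ) (x : E) :
    fderiv ℝ (u t) x = (fderiv ℝ (uncurry u) (t, x)).comp (.inr ℝ ℝ E) :=
  ((hu.differentiable one_ne_zero (t, x)).hasFDerivAt.comp x (hasFDerivAt_prodMk_right t x)).fderiv

theorem hasDerivAt_fderiv_timeDeriv (hu : ContDiff ℝ 2 (uncurry u)) (t : ℝ) (x : E) :
    HasDerivAt (fun s => fderiv ℝ (u s) x) (fderiv ℝ (timeDeriv u t) x) t := by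
  have hu1 : ContDiff ℝ 1 (uncurry u) := hu.of_le one_le_two
  have hD : HasFDerivAt (fderiv ℝ (uncurry u)) (fderiv ℝ (fderiv ℝ (uncurry u)) (t, x)) (t, x) :=
    ((hu.fderiv_right (m := 1) one_add_one_eq_two.le).differentiable one_ne_zero _).hasFDerivAt
  have htime : HasDerivAt (fun s => fderiv ℝ (uncurry u) (s, x))
      (fderiv ℝ (fderiv ℝ (uncurry u)) (t, x) (1, 0)) t :=
    hD.comp_hasDerivAt t ((hasDerivAt_id t).prodMk (hasDerivAt_const t x))
  have hspace : HasFDerivAt (fun y => fderiv ℝ (uncurry u) (t, y))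
      ((fderiv ℝ (fderiv ℝ (uncurry u)) (t, x)).comp (.inr ℝ ℝ E)) x :=
    hD.comp x (hasFDerivAt_prodMk_right t x)
  have hsymm : IsSymmSndFDerivAt ℝ (uncurry u) (t, x) :=
    hu.contDiffAt.isSymmSndFDerivAt (by simp)
  have hmixed : fderiv ℝ (timeDeriv u t) x =
      (fderiv ℝ (fderiv ℝ (uncurry u)) (t, x) (1, 0)).comp (.inr ℝ ℝ E) := by
    rw [funext (timeDeriv_eq_fderiv_uncurry hu1 t),
      (hspace.clm_apply (hasFDerivAt_const (1, 0) x)).fderiv]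
    ext v
    simpa using hsymm.eq (0, v) (1, 0)
  rw [hmixed]
  simp only [fderiv_eq_fderiv_uncurry_comp_inr hu1]
  exact (ContinuousLinearMap.precomp F (.inr ℝ ℝ E)).hasFDerivAt.comp_hasDerivAt t htime

end TimeDeriv

section Gradient

variable {E : Type*} [NormedAddCommGroup E] [InnerProductSpace ℝ E] [CompleteSpace E]
  {u : ℝ → E → ℝ}

theorem continuous_uncurry_gradient (hu : ContDiff ℝ 1 (uncurry u)) :
    Continuous (uncurry fun t => gradient (u t)) := by
  have hfderiv : Continuous fun p : ℝ × E => fderiv ℝ (u p.1) p.2 :=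
    (ContDiff.fderiv (f := fun p : ℝ × E => u p.1) (hu.comp
      ((contDiff_fst.comp contDiff_fst).prodMk contDiff_snd)) contDiff_snd
      (zero_add _).le).continuous
  exact (toDual ℝ E).symm.continuous.comp hfderiv

theorem hasDerivAt_gradient_timeDeriv (hu : ContDiff ℝ 2 (uncurry u)) (t : ℝ) (x : E) :
    HasDerivAt (fun s => gradient (u s) x) (gradient (timeDeriv u t) x) t :=
  (toDual ℝ E).symm.toContinuousLinearEquiv.hasFDerivAt.comp_hasDerivAt t
    (hasDerivAt_fderiv_timeDeriv hu t x)

end Gradient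

section Green

variable {E : Type*} [NormedAddCommGroup E] [InnerProductSpace ℝ E] [FiniteDimensional ℝ E]
  {f g : E → ℝ}

theorem continuous_laplacian (hf : ContDiff ℝ 2 f) : Continuous (Δ f) := by
  rw [laplacian_eq_iteratedFDeriv_stdOrthonormalBasis]
  have := hf.continuous_iteratedFDeriv (m := 2) le_rfl
  fun_prop

theorem laplacian_eq_sum_fderiv_fderiv (hf : ContDiff ℝ 2 f) (x : E) :
    Δ f x = ∑ i, fderiv ℝ (fun y => fderiv ℝ f y (stdOrthonormalBasis ℝ E i)) x
      (stdOrthonormalBasis ℝ E i) := by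
  have hf' : DifferentiableAt ℝ (fderiv ℝ f) x :=
    (hf.fderiv_right (m := 1) one_add_one_eq_two.le).differentiable one_ne_zero x
  rw [laplacian_eq_iteratedFDeriv_stdOrthonormalBasis]
  refine Finset.sum_congr rfl fun i _ => ?_
  rw [fderiv_clm_apply hf' (differentiableAt_const _)]
  simp [iteratedFDeriv_two_apply]

theorem inner_gradient_gradient_eq_sum (f g : E → ℝ) (x : E) :
    inner ℝ (gradient f x) (gradient g x) =
      ∑ i, fderiv ℝ f x (stdOrthonormalBasis ℝ E i) * fderiv ℝ g x (stdOrthonormalBasis ℝ E i) := by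
  rw [← (stdOrthonormalBasis ℝ E).sum_inner_mul_inner]
  simp [inner_gradient_left, inner_gradient_right]

variable [MeasurableSpace E] [BorelSpace E] (μ : Measure E) [μ.IsAddHaarMeasure]

theorem integral_fderiv_mul_eq_neg_integral_mul_fderiv (hf : ContDiff ℝ 1 f) (hg : ContDiff ℝ 1 g)
    (hsupp : HasCompactSupport g) (v : E) :
    ∫ x, fderiv ℝ f x v * g x ∂μ = -∫ x, f x * fderiv ℝ g x v ∂μ := by
  have hf' : Continuous fun x => fderiv ℝ f x v :=
    (hf.continuous_fderiv one_ne_zero).clm_apply continuous_const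
  have hg' : Continuous fun x => fderiv ℝ g x v :=
    (hg.continuous_fderiv one_ne_zero).clm_apply continuous_const
  rw [integral_mul_fderiv_eq_neg_fderiv_mul_of_integrable, neg_neg]
  · exact (hf'.mul hg.continuous).integrable_of_hasCompactSupport hsupp.mul_left
  · exact (hf.continuous.mul hg').integrable_of_hasCompactSupport (hsupp.fderiv_apply ℝ v).mul_left
  · exact (hf.continuous.mul hg.continuous).integrable_of_hasCompactSupport hsupp.mul_left
  · exact fun x _ => hf.differentiable one_ne_zero x
  · exact fun x _ => hg.differentiable one_ne_zero x

theorem integral_laplacian_mul_eq_neg_integral_inner_gradient (hf : ContDiff ℝ 2 f)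
    (hg : ContDiff ℝ 1 g) (hsupp : HasCompactSupport g) :
    ∫ x, Δ f x * g x ∂μ = -∫ x, inner ℝ (gradient f x) (gradient g x) ∂μ := by
  have hf' (v : E) : ContDiff ℝ 1 fun x => fderiv ℝ f x v :=
    (hf.fderiv_right one_add_one_eq_two.le).clm_apply contDiff_const
  have hg' (v : E) : Continuous fun x => fderiv ℝ g x v :=
    (hg.continuous_fderiv one_ne_zero).clm_apply continuous_const
  have hf'' (v : E) : Continuous fun x => fderiv ℝ (fun y => fderiv ℝ f y v) x v :=
    ((hf' v).continuous_fderiv one_ne_zero).clm_apply continuous_const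
  simp only [laplacian_eq_sum_fderiv_fderiv hf, inner_gradient_gradient_eq_sum, Finset.sum_mul]
  rw [integral_finsetSum, integral_finsetSum, ← Finset.sum_neg_distrib]
  · exact Finset.sum_congr rfl fun i _ =>
      integral_fderiv_mul_eq_neg_integral_mul_fderiv μ (hf' _) hg hsupp _
  · exact fun i _ => ((hf' _).continuous.mul (hg' _)).integrable_of_hasCompactSupport
      (hsupp.fderiv_apply ℝ _).mul_left
  · exact fun i _ => ((hf'' _).mul hg.continuous).integrable_of_hasCompactSupport hsupp.mul_left

end Green

theorem lap_eq_laplacian {n : ℕ} (f : EuclideanSpace ℝ (Fin n) → ℝ) : lap f = Δ f := by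
  ext x
  simp [lap, laplacian_eq_iteratedFDeriv_orthonormalBasis f (EuclideanSpace.basisFun (Fin n) ℝ)]

section IntegralBounds

theorem intervalIntegrable_of_continuousOn_Ici {F : Type*} [NormedAddCommGroup F] {f : ℝ → F}
    {a b : ℝ} (hf : ContinuousOn f (Ici a)) (hab : a ≤ b) : IntervalIntegrable f volume a b :=
  (hf.mono Icc_subset_Ici_self).intervalIntegrable_of_Icc hab

theorem integral_eq_sub_of_hasDerivAt_Ioi {F : Type*} [NormedAddCommGroup F] [NormedSpace ℝ F]
    [CompleteSpace F] {f f' : ℝ → F} {a b : ℝ} (hab : a ≤ b) (hf : ContinuousOn f (Ici a))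
    (hf' : ContinuousOn f' (Ici a)) (hderiv : ∀ s, a < s → HasDerivAt f (f' s) s) :
    ∫ s in a..b, f' s = f b - f a :=
  intervalIntegral.integral_eq_sub_of_hasDerivAt_of_le hab (hf.mono Icc_subset_Ici_self)
    (fun s hs => hderiv s hs.1) (intervalIntegrable_of_continuousOn_Ici hf' hab)

theorem neg_integral_mul_le_integral_sq_add {X : Type*} [MeasurableSpace X] {μ : Measure X}
    {f g : X → ℝ} (hf : MemLp f 2 μ) (hg : MemLp g 2 μ) :
    -∫ x, f x * g x ∂μ ≤ (∫ x, f x ^ 2 ∂μ) + 1 / 4 * ∫ x, g x ^ 2 ∂μ := by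
  rw [← integral_neg, ← integral_const_mul,
    ← integral_add hf.integrable_sq (hg.integrable_sq.const_mul _)]
  refine integral_mono (hf.integrable_mul hg).neg
    (hf.integrable_sq.add (hg.integrable_sq.const_mul _)) fun x => ?_
  linarith [sq_nonneg (f x + 1 / 2 * g x)]

end IntegralBounds

section SpatialSupport

variable {X F : Type*} [TopologicalSpace X] [NormedAddCommGroup F] {f : ℝ → X → F}

/-- Local-in-time uniform compactness of the spatial supports of `f t`, for times `t ≥ 0` only: this
is the form of finite speed of propagation available for a solution of the Cauchy problem. -/
def HasSpatiallyCompactSupport (f : ℝ → X → F) : Prop :=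
  ∀ T, ∃ K, IsCompact K ∧ ∀ t ∈ Icc 0 T, ∀ x ∉ K, f t x = 0

namespace HasSpatiallyCompactSupport

theorem mono {G : Type*} [NormedAddCommGroup G] {g : ℝ → X → G}
    (hf : HasSpatiallyCompactSupport f) (hfg : ∀ t x, f t x = 0 → g t x = 0) :
    HasSpatiallyCompactSupport g := fun T => by
  obtain ⟨K, hK, hfK⟩ := hf T
  exact ⟨K, hK, fun t ht x hx => hfg t x (hfK t ht x hx)⟩

protected theorem timeDeriv [NormedSpace ℝ F] (hf : HasSpatiallyCompactSupport f) :
    HasSpatiallyCompactSupport (timeDeriv f) := fun T => by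
  obtain ⟨K, hK, hfK⟩ := hf (T + 1)
  refine ⟨K, hK, fun t ht x hx => ?_⟩
  -- At `t = 0` only the one-sided derivative is known to vanish, hence the derivative within `Icc`.
  by_cases hdiff : DifferentiableAt ℝ (fun s => f s x) t
  · have ht' : t ∈ Icc 0 (T + 1) := ⟨ht.1, by linarith [ht.2]⟩
    have hzero : HasDerivWithinAt (fun s => f s x) 0 (Icc 0 (T + 1)) t :=
      (hasDerivWithinAt_const t _ (0 : F)).congr_of_mem (fun s hs => hfK s hs x hx) ht'
    have hunique := uniqueDiffOn_Icc (by linarith [ht.1, ht.2] : (0 : ℝ) < T + 1) t ht'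
    exact hunique.eq_deriv _ hdiff.hasDerivAt.hasDerivWithinAt hzero
  · exact deriv_zero_of_not_differentiableAt hdiff

theorem hasCompactSupport [R1Space X] (hf : HasSpatiallyCompactSupport f) {t : ℝ} (ht : 0 ≤ t) :
    HasCompactSupport (f t) := by
  obtain ⟨K, hK, hfK⟩ := hf t
  exact .intro hK (hfK t ⟨ht, le_rfl⟩)

protected theorem gradient {E : Type*} [NormedAddCommGroup E] [InnerProductSpace ℝ E]
    [CompleteSpace E] {f : ℝ → E → ℝ} (hf : HasSpatiallyCompactSupport f) :
    HasSpatiallyCompactSupport fun t => gradient (f t) := fun T => by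
  obtain ⟨K, hK, hfK⟩ := hf T
  refine ⟨K, hK, fun t ht x hx => ?_⟩
  have hzero : f t =ᶠ[𝓝 x] fun _ => 0 :=
    (hK.isClosed.isOpen_compl.eventually_mem hx).mono (hfK t ht)
  exact hzero.gradient_eq.trans (gradient_fun_const x 0)

variable [MeasurableSpace X] [OpensMeasurableSpace X] {μ : Measure X}
  [IsFiniteMeasureOnCompacts μ]

theorem integrable [R1Space X] (hf : HasSpatiallyCompactSupport f) (hcont : Continuous (uncurry f))
    {t : ℝ} (ht : 0 ≤ t) : Integrable (f t) μ :=
  (hcont.comp (.prodMk_right t)).integrable_of_hasCompactSupport (hf.hasCompactSupport ht)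

variable [NormedSpace ℝ F]

theorem continuousOn_integral (hf : HasSpatiallyCompactSupport f)
    (hcont : Continuous (uncurry f)) : ContinuousOn (fun t => ∫ x, f t x ∂μ) (Ici 0) := by
  intro t ht
  obtain ⟨K, hK, hfK⟩ := hf (t + 1)
  have hloc := continuousOn_integral_of_compact_support (μ := μ) hK hcont.continuousOn
    (fun s x hs => hfK s hs x)
  refine (hloc t ⟨ht, (lt_add_one t).le⟩).mono_of_mem_nhdsWithin ?_
  filter_upwards [self_mem_nhdsWithin, nhdsWithin_le_nhds (Iic_mem_nhds (lt_add_one t))]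
    with s hs hst using ⟨hs, hst⟩

theorem hasDerivAt_integral [T2Space X] (hf : HasSpatiallyCompactSupport f)
    {f' : ℝ → X → F} (hcont : Continuous (uncurry f)) (hcont' : Continuous (uncurry f'))
    (hderiv : ∀ t x, HasDerivAt (fun s => f s x) (f' t x) t) {t : ℝ} (ht : 0 < t) :
    HasDerivAt (fun s => ∫ x, f s x ∂μ) (∫ x, f' t x ∂μ) t := by
  have hf' : HasSpatiallyCompactSupport f' :=
    hf.timeDeriv.mono fun t x h => (hderiv t x).deriv.symm.trans h
  obtain ⟨K, hK, hfK⟩ := hf' (t + 1)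
  obtain ⟨C, hC⟩ := (isCompact_Icc.prod hK).exists_bound_of_continuousOn
    (s := Icc 0 (t + 1) ×ˢ K) hcont'.continuousOn
  have hbound (x : X) (s : ℝ) (hs : s ∈ Icc 0 (t + 1)) :
      ‖f' s x‖ ≤ K.indicator (fun _ => C) x := by
    by_cases hx : x ∈ K
    · rw [indicator_of_mem hx]
      exact hC (s, x) ⟨hs, hx⟩
    · rw [indicator_of_notMem hx, hfK s hs x hx, norm_zero]
  have hmeas : ∀ᶠ s in 𝓝 t, AEStronglyMeasurable (f s) μ :=
    (eventually_ge_nhds ht).mono fun s hs => (hf.integrable hcont hs).aestronglyMeasurable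
  have hbound_int : Integrable (K.indicator fun _ => C) μ :=
    (integrable_indicator_iff hK.measurableSet).2 (integrableOn_const hK.measure_ne_top)
  exact (hasDerivAt_integral_of_dominated_loc_of_deriv_le (𝕜 := ℝ)
    (Icc_mem_nhds ht (lt_add_one t)) hmeas (hf.integrable hcont ht.le)
    (hf'.integrable hcont' ht.le).aestronglyMeasurable (.of_forall hbound) hbound_int
    (.of_forall fun x s _ => hderiv s x)).2

section Mul

variable {X : Type*} [TopologicalSpace X] {f g : ℝ → X → ℝ}

theorem mul_right (hf : HasSpatiallyCompactSupport f) :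
    HasSpatiallyCompactSupport fun t x => f t x * g t x :=
  hf.mono fun t x hx => by rw [hx, zero_mul]

variable [MeasurableSpace X] [OpensMeasurableSpace X] {μ : Measure X}
  [IsFiniteMeasureOnCompacts μ]

theorem integrable_mul [R1Space X] (hf : HasSpatiallyCompactSupport f)
    (hfc : Continuous (uncurry f)) (hgc : Continuous (uncurry g)) {t : ℝ} (ht : 0 ≤ t) :
    Integrable (fun x => f t x * g t x) μ :=
  hf.mul_right.integrable (hfc.mul hgc) ht

theorem continuousOn_integral_mul (hf : HasSpatiallyCompactSupport f)
    (hfc : Continuous (uncurry f)) (hgc : Continuous (uncurry g)) :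
    ContinuousOn (fun t => ∫ x, f t x * g t x ∂μ) (Ici 0) :=
  hf.mul_right.continuousOn_integral (hfc.mul hgc)

theorem continuousOn_integral_sq (hf : HasSpatiallyCompactSupport f)
    (hfc : Continuous (uncurry f)) : ContinuousOn (fun t => ∫ x, f t x ^ 2 ∂μ) (Ici 0) := by
  simpa only [sq] using hf.continuousOn_integral_mul hfc hfc

end Mul

section MulDeriv

variable {E : Type*} [NormedAddCommGroup E] [NormedSpace ℝ E] [MeasurableSpace E]
  [OpensMeasurableSpace E] {μ : Measure E} [IsFiniteMeasureOnCompacts μ] {f g : ℝ → E → ℝ} {t : ℝ}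

theorem hasDerivAt_integral_mul (hsupp : HasSpatiallyCompactSupport f)
    (hf : ContDiff ℝ 1 (uncurry f)) (hg : ContDiff ℝ 1 (uncurry g)) (ht : 0 < t) :
    HasDerivAt (fun s => ∫ x, f s x * g s x ∂μ)
      ((∫ x, timeDeriv f t x * g t x ∂μ) + ∫ x, f t x * timeDeriv g t x ∂μ) t := by
  have hf' : Continuous (uncurry (timeDeriv f)) :=
    (contDiff_uncurry_timeDeriv (m := 0) hf (zero_add _).le).continuous
  have hg' : Continuous (uncurry (timeDeriv g)) :=
    (contDiff_uncurry_timeDeriv (m := 0) hg (zero_add _).le).continuous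
  rw [← integral_add (hsupp.timeDeriv.integrable_mul hf' hg.continuous ht.le)
    (hsupp.integrable_mul hf.continuous hg' ht.le)]
  exact hsupp.mul_right.hasDerivAt_integral
    (f' := fun t x => timeDeriv f t x * g t x + f t x * timeDeriv g t x)
    (hf.continuous.mul hg.continuous) ((hf'.mul hg.continuous).add (hf.continuous.mul hg'))
    (fun t x => (hasDerivAt_timeDeriv hf t x).mul (hasDerivAt_timeDeriv hg t x)) ht

theorem hasDerivAt_integral_sq (hsupp : HasSpatiallyCompactSupport f)
    (hf : ContDiff ℝ 1 (uncurry f)) (ht : 0 < t) :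
    HasDerivAt (fun s => ∫ x, f s x ^ 2 ∂μ) (2 * ∫ x, timeDeriv f t x * f t x ∂μ) t := by
  have hmul := hsupp.hasDerivAt_integral_mul (μ := μ) hf hf ht
  simp only [mul_comm (f t _), ← two_mul, ← sq] at hmul
  exact hmul

end MulDeriv

end HasSpatiallyCompactSupport

theorem hasSpatiallyCompactSupport_of_norm {E : Type*} [NormedAddCommGroup E] [ProperSpace E]
    {f : ℝ → E → F} (hf : ∀ T, 0 < T → ∃ R, ∀ t ∈ Icc 0 T, ∀ x, R ≤ ‖x‖ → f t x = 0) :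
    HasSpatiallyCompactSupport f := fun T => by
  obtain ⟨R, hR⟩ := hf (max T 1) (lt_max_of_lt_right one_pos)
  refine ⟨Metric.closedBall 0 R, isCompact_closedBall 0 R, fun t ht x hx => ?_⟩
  rw [mem_closedBall_zero_iff, not_le] at hx
  exact hR t ⟨ht.1, ht.2.trans (le_max_left T 1)⟩ x hx.le

end SpatialSupport

section DampedWave

variable {n : ℕ}

/-- The quadratic form `‖∇f‖² + ∫ V f²` of the operator `-Δ + V`. -/
def schrodingerForm (V f : EuclideanSpace ℝ (Fin n) → ℝ) : ℝ :=
  (∫ x, ‖gradient f x‖ ^ 2) + ∫ x, V x * f x ^ 2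

/-- Classical solutions of `∂ₜ²u - Δu + Vu + ∂ₜu = 0` that are compactly supported in space. The
function `u` is defined and `C²` on all of `ℝ × ℝⁿ`, but only times `t ≥ 0` are constrained. -/
structure IsDampedWaveSolution (V : EuclideanSpace ℝ (Fin n) → ℝ)
    (u : ℝ → EuclideanSpace ℝ (Fin n) → ℝ) : Prop where
  contDiff : ContDiff ℝ 2 (uncurry u)
  equation : ∀ t, 0 ≤ t → ∀ x,
    timeDeriv (timeDeriv u) t x - lap (u t) x + V x * u t x + timeDeriv u t x = 0
  support : HasSpatiallyCompactSupport u

variable {V f : EuclideanSpace ℝ (Fin n) → ℝ} {u : ℝ → EuclideanSpace ℝ (Fin n) → ℝ} {t : ℝ}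

theorem schrodingerForm_nonneg (hV : ∀ x, 0 ≤ V x) : 0 ≤ schrodingerForm V f :=
  add_nonneg (integral_nonneg fun _ => sq_nonneg _)
    (integral_nonneg fun x => mul_nonneg (hV x) (sq_nonneg _))

theorem energy_nonneg (hV : ∀ x, 0 ≤ V x) : 0 ≤ energy V u t :=
  mul_nonneg (by norm_num) (integral_nonneg fun x =>
    add_nonneg (add_nonneg (sq_nonneg _) (sq_nonneg _)) (mul_nonneg (hV x) (sq_nonneg _)))

namespace IsDampedWaveSolution

theorem contDiff_one (h : IsDampedWaveSolution V u) : ContDiff ℝ 1 (uncurry u) :=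
  h.contDiff.of_le one_le_two

theorem contDiff_timeDeriv (h : IsDampedWaveSolution V u) :
    ContDiff ℝ 1 (uncurry (timeDeriv u)) :=
  contDiff_uncurry_timeDeriv h.contDiff one_add_one_eq_two.le

theorem continuousOn_integral_timeDeriv_sq (h : IsDampedWaveSolution V u) :
    ContinuousOn (fun t => ∫ x, timeDeriv u t x ^ 2) (Ici 0) :=
  h.support.timeDeriv.continuousOn_integral_sq h.contDiff_timeDeriv.continuous

theorem continuousOn_schrodingerForm (h : IsDampedWaveSolution V u) (hV : Continuous V) :
    ContinuousOn (fun t => schrodingerForm V (u t)) (Ici 0) := by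
  have hu := h.contDiff.continuous
  have hgrad := continuous_uncurry_gradient h.contDiff_one
  exact ((h.support.gradient.mono fun t x hx => by simp [hx]).continuousOn_integral
    (by fun_prop)).add
    ((h.support.mono fun t x hx => by simp [hx]).continuousOn_integral (by fun_prop))

theorem energy_eq (h : IsDampedWaveSolution V u) (hV : Continuous V) (ht : 0 ≤ t) :
    energy V u t = 1 / 2 * ((∫ x, timeDeriv u t x ^ 2) + schrodingerForm V (u t)) := by
  have hu := h.contDiff.continuous
  have hut := h.contDiff_timeDeriv.continuous
  have hgrad := continuous_uncurry_gradient h.contDiff_one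
  have hkin : Integrable fun x => timeDeriv u t x ^ 2 :=
    (h.support.timeDeriv.mono (g := fun t x => timeDeriv u t x ^ 2)
      fun t x hx => by simp [hx]).integrable (by fun_prop) ht
  have hdir : Integrable fun x => ‖gradient (u t) x‖ ^ 2 :=
    (h.support.gradient.mono (g := fun t x => ‖gradient (u t) x‖ ^ 2)
      fun t x hx => by simp [hx]).integrable (by fun_prop) ht
  have hpot : Integrable fun x => V x * u t x ^ 2 :=
    (h.support.mono (g := fun t x => V x * u t x ^ 2)
      fun t x hx => by simp [hx]).integrable (by fun_prop) ht
  rw [schrodingerForm, ← add_assoc, ← integral_add hkin hdir,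
    ← integral_add (by exact hkin.add hdir) hpot]
  rfl

theorem integral_timeDeriv_sq_le (h : IsDampedWaveSolution V u) (hV : Continuous V)
    (hVnonneg : ∀ x, 0 ≤ V x) (ht : 0 ≤ t) : ∫ x, timeDeriv u t x ^ 2 ≤ 2 * energy V u t := by
  linarith [h.energy_eq hV ht, schrodingerForm_nonneg (f := u t) hVnonneg]

theorem continuousOn_energy (h : IsDampedWaveSolution V u) (hV : Continuous V) :
    ContinuousOn (energy V u) (Ici 0) :=
  ((h.continuousOn_integral_timeDeriv_sq.add (h.continuousOn_schrodingerForm hV)).const_mul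
    (1 / 2)).congr fun _ ht => h.energy_eq hV ht

theorem integral_timeDeriv_timeDeriv_mul (h : IsDampedWaveSolution V u) (hV : Continuous V)
    (ht : 0 ≤ t) {g : EuclideanSpace ℝ (Fin n) → ℝ} (hg : ContDiff ℝ 1 g)
    (hsupp : HasCompactSupport g) :
    ∫ x, timeDeriv (timeDeriv u) t x * g x =
      -(∫ x, inner ℝ (gradient (u t) x) (gradient g x)) - (∫ x, V x * u t x * g x)
        - ∫ x, timeDeriv u t x * g x := by
  have hslice : ContDiff ℝ 2 (u t) := h.contDiff.comp (contDiff_prodMk_right t)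
  have hut : Continuous (timeDeriv u t) := h.contDiff_timeDeriv.continuous.comp (.prodMk_right t)
  have hgc := hg.continuous
  have hlap := continuous_laplacian hslice
  have hint {f : EuclideanSpace ℝ (Fin n) → ℝ} (hf : Continuous f) :
      Integrable fun x => f x * g x :=
    (hf.mul hgc).integrable_of_hasCompactSupport hsupp.mul_left
  have huV : Continuous fun x => V x * u t x := hV.mul hslice.continuous
  rw [← integral_laplacian_mul_eq_neg_integral_inner_gradient volume hslice hg hsupp,
    ← integral_sub (hint hlap) (hint huV),
    ← integral_sub (by exact (hint hlap).sub (hint huV)) (hint hut)]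
  refine integral_congr_ae (.of_forall fun x => ?_)
  have heq := h.equation t ht x
  rw [lap_eq_laplacian] at heq
  linear_combination g x * heq

theorem hasDerivAt_schrodingerForm (h : IsDampedWaveSolution V u) (hV : Continuous V)
    (ht : 0 < t) :
    HasDerivAt (fun s => schrodingerForm V (u s))
      (2 * ((∫ x, inner ℝ (gradient (u t) x) (gradient (timeDeriv u t) x)) +
        ∫ x, V x * u t x * timeDeriv u t x)) t := by
  have hu := h.contDiff.continuous
  have hut := h.contDiff_timeDeriv.continuous
  have hgrad := continuous_uncurry_gradient h.contDiff_one
  have hgradt := continuous_uncurry_gradient h.contDiff_timeDeriv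
  rw [mul_add, ← integral_const_mul, ← integral_const_mul]
  refine HasDerivAt.add
    (HasSpatiallyCompactSupport.hasDerivAt_integral
      (f' := fun t x => 2 * inner ℝ (gradient (u t) x) (gradient (timeDeriv u t) x))
      (h.support.gradient.mono fun t x hx => by simp [hx]) (by fun_prop) (by fun_prop)
      (fun t x => (hasDerivAt_gradient_timeDeriv h.contDiff t x).norm_sq) ht)
    (HasSpatiallyCompactSupport.hasDerivAt_integral
      (f' := fun t x => 2 * (V x * u t x * timeDeriv u t x))
      (h.support.mono fun t x hx => by simp [hx]) (by fun_prop) (by fun_prop)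
      (fun t x => ?_) ht)
  refine (((hasDerivAt_timeDeriv h.contDiff_one t x).pow 2).const_mul (V x)).congr_deriv ?_
  ring

theorem hasDerivAt_energy (h : IsDampedWaveSolution V u) (hV : Continuous V) (ht : 0 < t) :
    HasDerivAt (energy V u) (-∫ x, timeDeriv u t x ^ 2) t := by
  have hkin := h.support.timeDeriv.hasDerivAt_integral_sq (μ := volume) h.contDiff_timeDeriv ht
  have hweak := h.integral_timeDeriv_timeDeriv_mul (g := timeDeriv u t) hV ht.le
    (h.contDiff_timeDeriv.comp (contDiff_prodMk_right t))
    (h.support.timeDeriv.hasCompactSupport ht.le)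
  have henergy : energy V u =ᶠ[𝓝 t] fun s =>
      1 / 2 * ((∫ x, timeDeriv u s x ^ 2) + schrodingerForm V (u s)) :=
    (eventually_ge_nhds ht).mono fun s hs => h.energy_eq hV hs
  refine (((hkin.add (h.hasDerivAt_schrodingerForm hV ht)).const_mul
    (1 / 2)).congr_of_eventuallyEq henergy).congr_deriv ?_
  simp only [sq]
  linarith

theorem hasDerivAt_integral_timeDeriv_mul (h : IsDampedWaveSolution V u) (hV : Continuous V)
    (ht : 0 < t) :
    HasDerivAt (fun s => ∫ x, timeDeriv u s x * u s x)
      ((∫ x, timeDeriv u t x ^ 2) - schrodingerForm V (u t) - ∫ x, timeDeriv u t x * u t x) t := by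
  have hweak := h.integral_timeDeriv_timeDeriv_mul (g := u t) hV ht.le
    (h.contDiff_one.comp (contDiff_prodMk_right t)) (h.support.hasCompactSupport ht.le)
  refine (h.support.timeDeriv.hasDerivAt_integral_mul h.contDiff_timeDeriv h.contDiff_one
    ht).congr_deriv ?_
  rw [hweak]
  simp only [schrodingerForm, real_inner_self_eq_norm_sq, sq, mul_assoc]
  ring

theorem neg_integral_timeDeriv_mul_le (h : IsDampedWaveSolution V u) (ht : 0 ≤ t) :
    -∫ x, timeDeriv u t x * u t x ≤ (∫ x, timeDeriv u t x ^ 2) + 1 / 4 * ∫ x, u t x ^ 2 :=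
  neg_integral_mul_le_integral_sq_add
    ((h.contDiff_timeDeriv.continuous.comp (.prodMk_right t)).memLp_of_hasCompactSupport
      (h.support.timeDeriv.hasCompactSupport ht))
    ((h.contDiff.continuous.comp (.prodMk_right t)).memLp_of_hasCompactSupport
      (h.support.hasCompactSupport ht))

theorem weighted_energy_identity (h : IsDampedWaveSolution V u) (hV : Continuous V) (ht : 0 ≤ t) :
    (1 + t) * energy V u t + ∫ s in 0..t, (1 + s) * ∫ x, timeDeriv u s x ^ 2 =
      energy V u 0 + ∫ s in 0..t, energy V u s := by
  have hE : ContinuousOn (energy V u) (Ici 0) := h.continuousOn_energy hV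
  have hkin := h.continuousOn_integral_timeDeriv_sq
  have hweighted : ContinuousOn (fun s => (1 + s) * ∫ x, timeDeriv u s x ^ 2) (Ici 0) := by
    fun_prop
  have hderiv (s : ℝ) (hs : 0 < s) : HasDerivAt (fun s => (1 + s) * energy V u s)
      (energy V u s - (1 + s) * ∫ x, timeDeriv u s x ^ 2) s := by
    refine (((hasDerivAt_id' s).const_add 1).mul (h.hasDerivAt_energy hV hs)).congr_deriv ?_
    ring
  have hftc := integral_eq_sub_of_hasDerivAt_Ioi ht (by fun_prop) (by fun_prop) hderiv
  rw [intervalIntegral.integral_sub (intervalIntegrable_of_continuousOn_Ici hE ht)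
    (intervalIntegrable_of_continuousOn_Ici hweighted ht)] at hftc
  linarith

theorem weighted_virial_identity (h : IsDampedWaveSolution V u) (hV : Continuous V) (ht : 0 ≤ t) :
    (∫ s in 0..t, (1 + s) * schrodingerForm V (u s)) + (1 + t) * (∫ x, timeDeriv u t x * u t x)
        + t / 2 * ∫ x, u t x ^ 2 =
      (∫ x, timeDeriv u 0 x * u 0 x) + (∫ s in 0..t, (1 + s) * ∫ x, timeDeriv u s x ^ 2)
        + 1 / 2 * ∫ s in 0..t, ∫ x, u s x ^ 2 := by
  have hkin := h.continuousOn_integral_timeDeriv_sq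
  have hform := h.continuousOn_schrodingerForm hV
  have hmass : ContinuousOn (fun s => ∫ x, u s x ^ 2) (Ici 0) :=
    h.support.continuousOn_integral_sq h.contDiff.continuous
  have hcross : ContinuousOn (fun s => ∫ x, timeDeriv u s x * u s x) (Ici 0) :=
    h.support.timeDeriv.continuousOn_integral_mul h.contDiff_timeDeriv.continuous
      h.contDiff.continuous
  -- The term `s / 2 * ‖u‖²` cancels the multiples of `(∂ₜu, u)` due to the weight and the damping.
  have hderiv (s : ℝ) (hs : 0 < s) : HasDerivAt
      (fun s => (1 + s) * (∫ x, timeDeriv u s x * u s x) + s / 2 * ∫ x, u s x ^ 2)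
      ((1 + s) * (∫ x, timeDeriv u s x ^ 2) + 1 / 2 * (∫ x, u s x ^ 2)
        - (1 + s) * schrodingerForm V (u s)) s := by
    refine ((((hasDerivAt_id' s).const_add 1).mul
      (h.hasDerivAt_integral_timeDeriv_mul hV hs)).add (((hasDerivAt_id' s).div_const 2).mul
      (h.support.hasDerivAt_integral_sq h.contDiff_one hs))).congr_deriv ?_
    ring
  have hftc := integral_eq_sub_of_hasDerivAt_Ioi ht (by fun_prop) (by fun_prop) hderiv
  rw [intervalIntegral.integral_sub (intervalIntegrable_of_continuousOn_Ici (by fun_prop) ht)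
    (intervalIntegrable_of_continuousOn_Ici (by fun_prop) ht),
    intervalIntegral.integral_add (intervalIntegrable_of_continuousOn_Ici (by fun_prop) ht)
    (intervalIntegrable_of_continuousOn_Ici (by fun_prop) ht),
    intervalIntegral.integral_const_mul] at hftc
  linarith

end IsDampedWaveSolution

theorem damped_wave_weighted_space_estimates_general (h : IsDampedWaveSolution V u)
    (hVcont : Continuous V) (hVnonneg : ∀ x, 0 ≤ V x) (ht : 0 ≤ t) :
    ((∫ s in 0..t, (1 + s) * schrodingerForm V (u s)) + (1 + t) / 4 * ∫ x, u t x ^ 2 ≤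
      3 * energy V u 0 + 3 * (∫ s in 0..t, energy V u s) + (∫ x, timeDeriv u 0 x * u 0 x)
        + 1 / 2 * (∫ x, u t x ^ 2) + ∫ s in 0..t, ∫ x, u s x ^ 2) ∧
      ∫ s in 0..t, (1 + s) * ∫ x, timeDeriv u s x ^ 2 ≤
        energy V u 0 + ∫ s in 0..t, energy V u s := by
  have henergy := h.weighted_energy_identity hVcont ht
  have hvirial := h.weighted_virial_identity hVcont ht
  have hyoung : -((1 + t) * ∫ x, timeDeriv u t x * u t x) ≤
      (1 + t) * (∫ x, timeDeriv u t x ^ 2) + (1 + t) / 4 * ∫ x, u t x ^ 2 := by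
    linarith [mul_le_mul_of_nonneg_left (h.neg_integral_timeDeriv_mul_le ht)
      (by positivity : 0 ≤ 1 + t)]
  have hkin_le : (1 + t) * (∫ x, timeDeriv u t x ^ 2) ≤ 2 * ((1 + t) * energy V u t) := by
    linarith [mul_le_mul_of_nonneg_left (h.integral_timeDeriv_sq_le hVcont hVnonneg ht)
      (by positivity : 0 ≤ 1 + t)]
  have henergy_nonneg : 0 ≤ (1 + t) * energy V u t :=
    mul_nonneg (by positivity) (energy_nonneg hVnonneg)
  have hkin_nonneg : 0 ≤ ∫ s in 0..t, (1 + s) * ∫ x, timeDeriv u s x ^ 2 :=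
    intervalIntegral.integral_nonneg ht fun s hs =>
      mul_nonneg (by linarith [hs.1]) (integral_nonneg fun _ => sq_nonneg _)
  have hmass_nonneg : 0 ≤ ∫ s in 0..t, ∫ x, u s x ^ 2 :=
    intervalIntegral.integral_nonneg ht fun s _ => integral_nonneg fun _ => sq_nonneg _
  constructor <;> linarith

end DampedWave

theorem damped_wave_weighted_space_estimates (n : ℕ) (hn : 1 ≤ n)
    (V : EuclideanSpace ℝ (Fin n) → ℝ)
    (hVcont : Continuous V) (hVbdd : ∃ M, ∀ x, |V x| ≤ M)
    (hVnonneg : ∀ x, 0 ≤ V x)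
    (u : ℝ → EuclideanSpace ℝ (Fin n) → ℝ)
    (u₀ u₁ : EuclideanSpace ℝ (Fin n) → ℝ)
    (hu : ContDiff ℝ (⊤ : ℕ∞) (fun p : ℝ × EuclideanSpace ℝ (Fin n) => u p.1 p.2))
    (hu₀smooth : ContDiff ℝ (⊤ : ℕ∞) u₀) (hu₀supp : HasCompactSupport u₀)
    (hu₁smooth : ContDiff ℝ (⊤ : ℕ∞) u₁) (hu₁supp : HasCompactSupport u₁)
    (hPDE : ∀ t, 0 ≤ t → ∀ x,
      deriv (fun s => deriv (fun r => u r x) s) t - lap (u t) x + V x * u t x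
        + deriv (fun s => u s x) t = 0)
    (hinit0 : ∀ x, u 0 x = u₀ x)
    (hinit1 : ∀ x, deriv (fun s => u s x) 0 = u₁ x)
    (hsupp : ∀ T, 0 < T → ∃ R, 0 < R ∧ ∀ t ∈ Set.Icc (0:ℝ) T, ∀ x,
      R ≤ ‖x‖ → u t x = 0)
    :
    ∀ t, 0 ≤ t →
      ((∫ s in (0:ℝ)..t, (1 + s) *
          ((∫ x, ‖gradient (u s) x‖ ^ 2) + ∫ x, V x * (u s x) ^ 2))
        + ((1 + t) / 4) * (∫ x, (u t x) ^ 2)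
      ≤ 3 * energy V u 0 + 3 * (∫ s in (0:ℝ)..t, energy V u s)
        + (∫ x, u₁ x * u₀ x) + (1/2) * (∫ x, (u t x) ^ 2)
        + ∫ s in (0:ℝ)..t, ∫ x, (u s x) ^ 2) ∧
      (∫ s in (0:ℝ)..t, (1 + s) * ∫ x, (deriv (fun r => u r x) s) ^ 2)
        ≤ energy V u 0 + ∫ s in (0:ℝ)..t, energy V u s := by
  have h : IsDampedWaveSolution V u :=
    ⟨contDiff_infty.1 hu 2, hPDE, hasSpatiallyCompactSupport_of_norm fun T hT =>
      (hsupp T hT).imp fun _ hR => hR.2⟩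
  intro t ht
  simp only [← hinit0, ← hinit1]
  exact damped_wave_weighted_space_estimates_general h hVcont hVnonneg ht
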